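/- Let Z : LC(ℝ) → ℝ be a simple, τ-upper semicontinuous, translation invariant and dually epi-translation invariant valuation that vanishes on indicator functions of closed intervals, let m > 0, q(x) = x²/2, and define ζ(a) = Z(a·q + I_{[-m,m]})/(2m) for a > 0. Then ζ extends to an element of Conc; in particular limsup_{a→0⁺} ζ(a) ≤ 0 (and hence ζ(a) → 0 as a → 0⁺) and ζ(a)/a → 0 as a → +∞. -/

import Mathlib

open MeasureTheory Filter Topology Pointwise Asymptotics

noncomputable section

variable {E : Type*} [NormedAddCommGroup E] [NormedSpace ℝ E]

/-- The effective domain of an extended-real-valued function. -/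
def edom (u : E → EReal) : Set E := {x | u x < ⊤}

/-- `u` has Lipschitz constant `L` on the interior of its domain. -/
def LipBound (u : E → EReal) (L : ℝ) : Prop :=
  ∀ x ∈ interior (edom u), ∀ y ∈ interior (edom u),
    |(u x).toReal - (u y).toReal| ≤ L * ‖x - y‖

/-- Membership in `LC`: proper, lower semicontinuous, convex, compact domain,
Lipschitz on the interior of the domain. -/
def IsLC (u : E → EReal) : Prop :=
  (∀ x y : E, ∀ t : ℝ, 0 < t → t < 1 →
      u (t • x + (1 - t) • y) ≤ (t : EReal) * u x + ((1 - t : ℝ) : EReal) * u y) ∧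
  LowerSemicontinuous u ∧
  (∀ x, u x ≠ ⊥) ∧
  (∃ x, u x ≠ ⊤) ∧
  IsCompact (edom u) ∧
  (∃ L : ℝ, 0 < L ∧ LipBound u L)

/-- τ-convergence: epi-convergence together with uniformly bounded Lipschitz constants. -/
def TauConv (uk : ℕ → E → EReal) (u : E → EReal) : Prop :=
  (∀ k, IsLC (uk k)) ∧ IsLC u ∧
  (∀ (x : E) (xk : ℕ → E), Tendsto xk atTop (𝓝 x) →
      u x ≤ liminf (fun k => uk k (xk k)) atTop) ∧
  (∀ x : E, ∃ xk : ℕ → E, Tendsto xk atTop (𝓝 x) ∧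
      Tendsto (fun k => uk k (xk k)) atTop (𝓝 (u x))) ∧
  (∃ M : ℝ, 0 < M ∧ ∀ k, LipBound (uk k) M)

/-- Valuation property on `LC`. -/
def IsVal (Z : (E → EReal) → ℝ) : Prop :=
  ∀ u v : E → EReal, IsLC u → IsLC v → IsLC (fun x => min (u x) (v x)) →
    Z (fun x => min (u x) (v x)) + Z (fun x => max (u x) (v x)) = Z u + Z v

/-- τ-upper semicontinuity. -/
def TauUSC (Z : (E → EReal) → ℝ) : Prop :=
  ∀ (uk : ℕ → E → EReal) (u : E → EReal), TauConv uk u →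
    limsup (fun k => Z (uk k)) atTop ≤ Z u

/-- τ-continuity. -/
def TauCont (Z : (E → EReal) → ℝ) : Prop :=
  ∀ (uk : ℕ → E → EReal) (u : E → EReal), TauConv uk u →
    Tendsto (fun k => Z (uk k)) atTop (𝓝 (Z u))

/-- Translation invariance. -/
def TransInv (Z : (E → EReal) → ℝ) : Prop :=
  ∀ u : E → EReal, IsLC u → ∀ y : E, Z (fun x => u (x - y)) = Z u

/-- Dual epi-translation invariance. -/
def DualTransInv (Z : (E → EReal) → ℝ) : Prop :=
  ∀ u : E → EReal, IsLC u → ∀ (l : E →ₗ[ℝ] ℝ) (c : ℝ),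
    Z (fun x => u x + ((l x + c : ℝ) : EReal)) = Z u

/-- SL_n invariance. -/
def SLInv (Z : (E → EReal) → ℝ) : Prop :=
  ∀ u : E → EReal, IsLC u → ∀ φ : E →ₗ[ℝ] E, LinearMap.det φ = 1 →
    Z (fun x => u (φ x)) = Z u

/-- The class `Conc`. -/
def IsConc (ζ : ℝ → ℝ) : Prop :=
  (∀ t ∈ Set.Ici (0 : ℝ), 0 ≤ ζ t) ∧ ConcaveOn ℝ (Set.Ici 0) ζ ∧
  Tendsto ζ (𝓝[>] 0) (𝓝 0) ∧
  Tendsto (fun t => ζ t / t) atTop (𝓝 0)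

open Classical in
/-- `(∞-valued) indicator function` of a set. -/
noncomputable def eIndicator (K : Set E) : E → EReal := fun x =>
  if x ∈ K then (0 : EReal) else ⊤

/-- Real part of an extended-real-valued function. -/
def toRealFn (u : E → EReal) : E → ℝ := fun x => (u x).toReal

open Classical in
/-- Second derivative of `u`, set to `0` where `u` is not twice differentiable. -/
noncomputable def secondDeriv (u : ℝ → EReal) : ℝ → ℝ := fun x =>
  if DifferentiableAt ℝ (toRealFn u) x ∧ DifferentiableAt ℝ (deriv (toRealFn u)) x
  then deriv (deriv (toRealFn u)) x
  else 0

/-- The function `ζ(a) = Z(a·q + I_{[-m,m]})/(2m)`, where `q(x) = x²/2`. -/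
noncomputable def zetaOf (Z : (ℝ → EReal) → ℝ) (m : ℝ) : ℝ → ℝ := fun a =>
  Z (fun x => ((a * (x ^ 2 / 2) : ℝ) : EReal) + eIndicator (Set.Icc (-m) m) x) / (2 * m)

/-!
On each interval a simple, translation invariant and dually epi-translation invariant valuation `Z`
sees a convex function only through its slope, up to translations of the interval and additive
constants of the slope. Hence the value of `Z` at `a * q` on an interval of length `l` is additive
in `l`. For concavity in `a`, approximate the slope `c * x`, where `c = p * a + (1 - p) * b`, by the
periodic repetition of short cells with slope `a` on a proportion `p` and slope `b` on the rest: the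
value on the approximations is constantly `p * ζ(a) + (1 - p) * ζ(b)`, so upper semicontinuity
bounds it by `ζ(c)`. The same argument with a step function as slope gives `0 ≤ ζ(c)`, because `Z`
vanishes on indicators. By concavity `ζ(a)` and `ζ(a) / a` converge as `a → 0⁺` and `a → ∞`; since
`ζ(a) / a` is the value of `Z` at `a * q` on an interval of length `1 / a`, both limits are values
along sequences converging to an indicator, hence `0` by upper semicontinuity.
-/

section Restriction

open Set

open scoped NNReal

/-- The extended-real-valued function `f + I_K`: equal to `f` on `K` and to `+∞` outside. -/
def addIndicator {X : Type*} (f : X → ℝ) (K : Set X) : X → EReal :=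
  fun x => (f x : EReal) + eIndicator K x

section Pointwise

variable {X : Type*} {f g : X → ℝ} {K K' : Set X} {x : X}

theorem addIndicator_of_mem (hx : x ∈ K) : addIndicator f K x = f x := by
  rw [addIndicator, eIndicator, if_pos hx, add_zero]

theorem addIndicator_of_notMem (hx : x ∉ K) : addIndicator f K x = ⊤ := by
  rw [addIndicator, eIndicator, if_neg hx, EReal.add_top_of_ne_bot (EReal.coe_ne_bot _)]

theorem addIndicator_congr (h : EqOn f g K) : addIndicator f K = addIndicator g K := by
  funext x
  by_cases hx : x ∈ K
  · rw [addIndicator_of_mem hx, addIndicator_of_mem hx, h hx]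
  · rw [addIndicator_of_notMem hx, addIndicator_of_notMem hx]

theorem addIndicator_zero : addIndicator (fun _ => 0) K = eIndicator K := by
  funext x
  rw [addIndicator, EReal.coe_zero, zero_add]

theorem addIndicator_ne_bot : addIndicator f K x ≠ ⊥ := by
  by_cases hx : x ∈ K
  · exact addIndicator_of_mem hx ▸ EReal.coe_ne_bot _
  · exact addIndicator_of_notMem hx ▸ top_ne_bot

theorem edom_addIndicator : edom (addIndicator f K) = K := by
  ext x
  by_cases hx : x ∈ K
  · simp [edom, addIndicator_of_mem hx, hx]
  · simp [edom, addIndicator_of_notMem hx, hx]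

theorem min_addIndicator :
    (fun x => min (addIndicator f K x) (addIndicator f K' x)) = addIndicator f (K ∪ K') := by
  funext x
  by_cases hx : x ∈ K <;> by_cases hx' : x ∈ K' <;>
    simp [addIndicator, eIndicator, hx, hx']

theorem max_addIndicator :
    (fun x => max (addIndicator f K x) (addIndicator f K' x)) = addIndicator f (K ∩ K') := by
  funext x
  by_cases hx : x ∈ K <;> by_cases hx' : x ∈ K' <;>
    simp [addIndicator, eIndicator, hx, hx']

end Pointwise

theorem lipBound_addIndicator {F : Type*} [NormedAddCommGroup F] {f : F → ℝ} {K : Set F}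
    {L : ℝ≥0} {M : ℝ} (hf : LipschitzOnWith L f K) (hLM : L ≤ M) :
    LipBound (addIndicator f K) M := by
  intro x hx y hy
  rw [edom_addIndicator] at hx hy
  have hx := interior_subset hx
  have hy := interior_subset hy
  rw [addIndicator_of_mem hx, addIndicator_of_mem hy, EReal.toReal_coe, EReal.toReal_coe]
  have := hf.dist_le_mul x hx y hy
  rw [Real.dist_eq, dist_eq_norm] at this
  exact this.trans (by gcongr)

theorem lowerSemicontinuous_addIndicator {X : Type*} [TopologicalSpace X] {f : X → ℝ}
    {K : Set X} (hf : ContinuousOn f K) (hK : IsClosed K) :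
    LowerSemicontinuous (addIndicator f K) := by
  intro x y hy
  by_cases hx : x ∈ K
  · rw [addIndicator_of_mem hx] at hy
    have hcont : ContinuousWithinAt (fun z => (f z : EReal)) K x :=
      continuous_coe_real_ereal.continuousAt.comp_continuousWithinAt (hf x hx)
    filter_upwards [eventually_nhdsWithin_iff.1 (hcont.eventually (lt_mem_nhds hy))] with z hz
    by_cases hzK : z ∈ K
    · exact addIndicator_of_mem hzK ▸ hz hzK
    · exact addIndicator_of_notMem hzK ▸ hy.trans (EReal.coe_lt_top _)
  · filter_upwards [hK.isOpen_compl.mem_nhds hx] with z hz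
    rwa [addIndicator_of_notMem hz, ← addIndicator_of_notMem hx]

section Convex

variable {f : E → ℝ} {K : Set E}

theorem addIndicator_convex (hf : ConvexOn ℝ K f) (x y : E) {t : ℝ} (ht₀ : 0 < t) (ht₁ : t < 1) :
    addIndicator f K (t • x + (1 - t) • y) ≤
      (t : EReal) * addIndicator f K x + ((1 - t : ℝ) : EReal) * addIndicator f K y := by
  have hne_bot : ∀ {s : ℝ}, 0 < s → ∀ z, (s : EReal) * addIndicator f K z ≠ ⊥ := by
    intro s hs z
    by_cases hz : z ∈ K
    · rw [addIndicator_of_mem hz, ← EReal.coe_mul]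
      exact EReal.coe_ne_bot _
    · rw [addIndicator_of_notMem hz, EReal.coe_mul_top_of_pos hs]
      exact top_ne_bot
  have ht₁' : 0 < 1 - t := sub_pos.2 ht₁
  by_cases hx : x ∈ K
  · by_cases hy : y ∈ K
    · have hz : t • x + (1 - t) • y ∈ K := hf.1 hx hy ht₀.le ht₁'.le (add_sub_cancel _ _)
      rw [addIndicator_of_mem hx, addIndicator_of_mem hy, addIndicator_of_mem hz]
      exact_mod_cast hf.2 hx hy ht₀.le ht₁'.le (add_sub_cancel _ _)
    · rw [addIndicator_of_notMem hy, EReal.coe_mul_top_of_pos ht₁',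
        EReal.add_top_of_ne_bot (hne_bot ht₀ x)]
      exact le_top
  · rw [addIndicator_of_notMem hx, EReal.coe_mul_top_of_pos ht₀,
      EReal.top_add_of_ne_bot (hne_bot ht₁' y)]
    exact le_top

theorem isLC_addIndicator {L : ℝ≥0} (hf : ConvexOn ℝ K f)
    (hL : LipschitzOnWith L f K) (hK : IsCompact K) (hne : K.Nonempty) :
    IsLC (addIndicator f K) := by
  obtain ⟨x₀, hx₀⟩ := hne
  exact ⟨fun x y t ht₀ ht₁ => addIndicator_convex hf x y ht₀ ht₁,
    lowerSemicontinuous_addIndicator hL.continuousOn hK.isClosed,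
    fun _ => addIndicator_ne_bot,
    ⟨x₀, addIndicator_of_mem hx₀ ▸ EReal.coe_ne_top _⟩,
    by rwa [edom_addIndicator],
    L + 1, by positivity, lipBound_addIndicator hL (le_add_of_nonneg_right zero_le_one)⟩

theorem IsLC.isCompact_of_addIndicator (h : IsLC (addIndicator f K)) : IsCompact K := by
  obtain ⟨-, -, -, -, hcompact, -⟩ := h
  rwa [edom_addIndicator] at hcompact

end Convex

section TauConvergence

variable {X : Type*} [TopologicalSpace X] {f : ℕ → X → ℝ} {g : X → ℝ} {K : ℕ → Set X} {e : ℕ → ℝ}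
  {x : X} {z : ℕ → X}

theorem eventually_addIndicator_eq_top (hK : Antitone K) (hclosed : ∀ k, IsClosed (K k))
    (hx : x ∉ ⋂ k, K k) (hz : Tendsto z atTop (𝓝 x)) :
    ∀ᶠ k in atTop, addIndicator (f k) (K k) (z k) = ⊤ := by
  obtain ⟨N, hN⟩ : ∃ N, x ∉ K N := by simpa using hx
  filter_upwards [hz.eventually ((hclosed N).isOpen_compl.mem_nhds hN), eventually_ge_atTop N]
    with k hk hNk
  exact addIndicator_of_notMem fun hmem => hk (hK hNk hmem)

theorem le_liminf_addIndicator (hK : Antitone K) (hclosed : ∀ k, IsClosed (K k))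
    (hg : ContinuousAt g x) (he : Tendsto e atTop (𝓝 0))
    (hfg : ∀ k, ∀ y ∈ K k, |f k y - g y| ≤ e k) (hz : Tendsto z atTop (𝓝 x)) :
    addIndicator g (⋂ k, K k) x ≤ liminf (fun k => addIndicator (f k) (K k) (z k)) atTop := by
  by_cases hx : x ∈ ⋂ k, K k
  · have hlim : Tendsto (fun k => ((g (z k) - e k : ℝ) : EReal)) atTop (𝓝 (g x)) := by
      rw [EReal.tendsto_coe]
      simpa using (hg.tendsto.comp hz).sub he
    rw [addIndicator_of_mem hx, ← hlim.liminf_eq]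
    refine liminf_le_liminf (Eventually.of_forall fun k => ?_)
    by_cases hzk : z k ∈ K k
    · rw [addIndicator_of_mem hzk, EReal.coe_le_coe_iff]
      linarith [(abs_le.1 (hfg k _ hzk)).1]
    · exact addIndicator_of_notMem hzk ▸ le_top
  · rw [(tendsto_nhds_of_eventually_eq
      (eventually_addIndicator_eq_top hK hclosed hx hz)).liminf_eq]
    exact le_top

theorem tendsto_addIndicator (hK : Antitone K) (hclosed : ∀ k, IsClosed (K k))
    (he : Tendsto e atTop (𝓝 0)) (hfg : ∀ k, ∀ y ∈ K k, |f k y - g y| ≤ e k) (x : X) :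
    Tendsto (fun k => addIndicator (f k) (K k) x) atTop (𝓝 (addIndicator g (⋂ k, K k) x)) := by
  by_cases hx : x ∈ ⋂ k, K k
  · have hxk : ∀ k, x ∈ K k := mem_iInter.1 hx
    simp only [addIndicator_of_mem hx, addIndicator_of_mem (hxk _), EReal.tendsto_coe]
    exact tendsto_iff_dist_tendsto_zero.2
      (squeeze_zero (fun _ => dist_nonneg) (fun k => hfg k x (hxk k)) he)
  · rw [addIndicator_of_notMem hx]
    exact tendsto_nhds_of_eventually_eq
      (eventually_addIndicator_eq_top hK hclosed hx tendsto_const_nhds)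

theorem tauConv_addIndicator {f : ℕ → E → ℝ} {g : E → ℝ} {K : ℕ → Set E} {L : ℝ≥0}
    (hf : ∀ k, IsLC (addIndicator (f k) (K k)))
    (hg : IsLC (addIndicator g (⋂ k, K k))) (hL : ∀ k, LipschitzOnWith L (f k) (K k))
    (hcont : Continuous g) (hK : Antitone K) (he : Tendsto e atTop (𝓝 0))
    (hfg : ∀ k, ∀ x ∈ K k, |f k x - g x| ≤ e k) :
    TauConv (fun k => addIndicator (f k) (K k)) (addIndicator g (⋂ k, K k)) := by
  have hclosed : ∀ k, IsClosed (K k) := fun k => (hf k).isCompact_of_addIndicator.isClosed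
  exact ⟨hf, hg,
    fun x _ hz => le_liminf_addIndicator hK hclosed hcont.continuousAt he hfg hz,
    fun x => ⟨fun _ => x, tendsto_const_nhds, tendsto_addIndicator hK hclosed he hfg x⟩,
    L + 1, by positivity,
    fun k => lipBound_addIndicator (hL k) (le_add_of_nonneg_right zero_le_one)⟩

end TauConvergence

end Restriction

section Valuation

open Set

/-- Simple valuations on `LC(E)` that are translation invariant and dually epi-translation
invariant. -/
structure IsInvariantSimpleVal (Z : (E → EReal) → ℝ) : Prop where
  isVal : IsVal Z
  transInv : TransInv Z
  dualTransInv : DualTransInv Z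
  simple : ∀ u : E → EReal, IsLC u → (∃ x : E, edom u = {x}) → Z u = 0

variable {Z : (E → EReal) → ℝ} {f : E → ℝ} {K K' : Set E}

theorem IsVal.addIndicator_union (hZ : IsVal Z) (hK : IsLC (addIndicator f K))
    (hK' : IsLC (addIndicator f K')) (hunion : IsLC (addIndicator f (K ∪ K'))) :
    Z (addIndicator f (K ∪ K')) + Z (addIndicator f (K ∩ K')) =
      Z (addIndicator f K) + Z (addIndicator f K') := by
  rw [← min_addIndicator, ← max_addIndicator]
  exact hZ _ _ hK hK' (by rwa [min_addIndicator])

theorem TransInv.addIndicator_translate (hZ : TransInv Z) (hK : IsLC (addIndicator f K)) (r : E) :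
    Z (addIndicator (fun x => f (x - r)) ((fun x => x - r) ⁻¹' K)) = Z (addIndicator f K) :=
  hZ _ hK r

theorem DualTransInv.addIndicator_add_affine (hZ : DualTransInv Z) (hK : IsLC (addIndicator f K))
    (l : E →ₗ[ℝ] ℝ) (c : ℝ) :
    Z (addIndicator (fun x => f x + (l x + c)) K) = Z (addIndicator f K) := by
  rw [← hZ _ hK l c]
  congr 1
  funext x
  rw [addIndicator, addIndicator, EReal.coe_add (f x), add_right_comm]

theorem TauUSC.le_of_tendsto {uk : ℕ → E → EReal} {u : E → EReal} {v : ℝ} (hZ : TauUSC Z)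
    (hu : TauConv uk u) (hv : Tendsto (fun k => Z (uk k)) atTop (𝓝 v)) : v ≤ Z u :=
  hv.limsup_eq ▸ hZ uk u hu

end Valuation

section Primitive

open Set intervalIntegral

open scoped NNReal

variable {φ ψ : ℝ → ℝ}

theorem integral_zero_sub_integral_zero (hφ : ∀ a b, IntervalIntegrable φ volume a b) (a b : ℝ) :
    (∫ y in 0..b, φ y) - ∫ y in 0..a, φ y = ∫ y in a..b, φ y :=
  integral_interval_sub_left (hφ 0 b) (hφ 0 a)

theorem lipschitzOnWith_integral {L : ℝ≥0} {s t : ℝ}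
    (hφ : ∀ a b, IntervalIntegrable φ volume a b) (hL : ∀ y ∈ Icc s t, |φ y| ≤ L) :
    LipschitzOnWith L (fun x => ∫ y in 0..x, φ y) (Icc s t) := by
  refine LipschitzOnWith.of_dist_le_mul fun x hx y hy => ?_
  rw [Real.dist_eq, integral_zero_sub_integral_zero hφ, Real.dist_eq]
  rw [← Real.norm_eq_abs]
  exact norm_integral_le_of_norm_le_const fun z hz =>
    hL z (uIcc_subset_Icc hy hx (uIoc_subset_uIcc hz))

theorem convexOn_integral_of_monotone (hφ : Monotone φ) :
    ConvexOn ℝ univ fun x => ∫ y in 0..x, φ y := by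
  have hint : ∀ a b, IntervalIntegrable φ volume a b := fun _ _ => hφ.intervalIntegrable
  refine convexOn_of_slope_mono_adjacent convex_univ fun {x y z} _ _ hxy hyz => ?_
  rw [integral_zero_sub_integral_zero hint, integral_zero_sub_integral_zero hint]
  have hleft : (∫ u in x..y, φ u) ≤ (y - x) * φ y := by
    simpa using integral_mono_on hxy.le (hint x y) intervalIntegrable_const fun u hu => hφ hu.2
  have hright : (z - y) * φ y ≤ ∫ u in y..z, φ u := by
    simpa using integral_mono_on hyz.le intervalIntegrable_const (hint y z) fun u hu => hφ hu.1
  calc (∫ u in x..y, φ u) / (y - x) ≤ φ y := (div_le_iff₀' (sub_pos.2 hxy)).2 hleft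
    _ ≤ (∫ u in y..z, φ u) / (z - y) := (le_div_iff₀' (sub_pos.2 hyz)).2 hright

theorem isLC_integral_of_monotone (hφ : Monotone φ) {s t : ℝ} (hst : s ≤ t) :
    IsLC (addIndicator (fun x => ∫ y in 0..x, φ y) (Icc s t)) := by
  have hL : ∀ y ∈ Icc s t, |φ y| ≤ (⟨max |φ s| |φ t|, by positivity⟩ : ℝ≥0) := fun y hy =>
    abs_le_max_abs_abs (hφ hy.1) (hφ hy.2)
  exact isLC_addIndicator
    ((convexOn_integral_of_monotone hφ).subset (subset_univ _) (convex_Icc s t))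
    (lipschitzOnWith_integral (fun _ _ => hφ.intervalIntegrable) hL) isCompact_Icc
    (nonempty_Icc.2 hst)

theorem integral_eq_integral_comp_sub_add_affine (hφ : ∀ a b, IntervalIntegrable φ volume a b)
    (hψ : ∀ a b, IntervalIntegrable ψ volume a b) {s t r β : ℝ}
    (h : ∀ y ∈ Ioo s t, φ y = ψ (y - r) + β) :
    ∃ c, ∀ x ∈ Icc s t, (∫ y in 0..x, φ y) = (∫ y in 0..(x - r), ψ y) + (β * x + c) := by
  refine ⟨(∫ y in 0..s, φ y) - (∫ y in 0..(s - r), ψ y) - β * s, fun x hx => ?_⟩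
  have hshift : IntervalIntegrable (fun y => ψ (y - r)) volume s x := by
    simpa using (hψ (s - r) (x - r)).comp_sub_right r
  have hpiece : (∫ y in s..x, φ y) = (∫ y in (s - r)..(x - r), ψ y) + (x - s) * β := by
    calc (∫ y in s..x, φ y) = ∫ y in s..x, (ψ (y - r) + β) := by
          rw [integral_of_le hx.1, integral_of_le hx.1, integral_Ioc_eq_integral_Ioo,
            integral_Ioc_eq_integral_Ioo]
          exact setIntegral_congr_fun measurableSet_Ioo
            fun y hy => h y ⟨hy.1, hy.2.trans_le hx.2⟩
      _ = _ := by
          rw [intervalIntegral.integral_add hshift intervalIntegrable_const,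
            integral_comp_sub_right, intervalIntegral.integral_const, smul_eq_mul]
  rw [← integral_zero_sub_integral_zero hφ, ← integral_zero_sub_integral_zero hψ] at hpiece
  linarith

theorem abs_integral_sub_integral_le (hφ : ∀ a b, IntervalIntegrable φ volume a b)
    (hψ : ∀ a b, IntervalIntegrable ψ volume a b) {l ε x : ℝ}
    (h : ∀ y ∈ Icc 0 l, |φ y - ψ y| ≤ ε) (hx : x ∈ Icc 0 l) :
    |(∫ y in 0..x, φ y) - ∫ y in 0..x, ψ y| ≤ ε * l := by
  have hε : 0 ≤ ε := (abs_nonneg _).trans (h x hx)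
  rw [← integral_sub (hφ 0 x) (hψ 0 x)]
  calc |∫ y in 0..x, (φ y - ψ y)| = ‖∫ y in 0..x, (φ y - ψ y)‖ := (Real.norm_eq_abs _).symm
    _ ≤ ε * |x - 0| := norm_integral_le_of_norm_le_const fun y hy =>
          h y (uIcc_subset_Icc (left_mem_Icc.2 (hx.1.trans hx.2)) hx (uIoc_subset_uIcc hy))
    _ ≤ ε * l := by
        rw [sub_zero, abs_of_nonneg hx.1]
        exact mul_le_mul_of_nonneg_left hx.2 hε

theorem iInter_Icc_eq_of_antitone_of_tendsto {s l : ℝ} {lk : ℕ → ℝ} (hanti : Antitone lk)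
    (hlim : Tendsto lk atTop (𝓝 l)) : ⋂ k, Icc s (lk k) = Icc s l := by
  ext x
  simp only [mem_iInter, mem_Icc]
  exact ⟨fun h => ⟨(h 0).1, ge_of_tendsto' hlim fun k => (h k).2⟩,
    fun h k => ⟨h.1, h.2.trans (hanti.le_of_tendsto hlim k)⟩⟩

end Primitive

section SlopeVal

open Set

open scoped NNReal

/-- The value of `Z` at the function on `[s, t]` with slope `φ`, that is, at `∫ φ + I_{[s,t]}`. For
a dually epi-translation invariant `Z` the constant of integration is irrelevant, and the primitive
is normalized to vanish at `0`. -/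
def slopeVal (Z : (ℝ → EReal) → ℝ) (φ : ℝ → ℝ) (s t : ℝ) : ℝ :=
  Z (addIndicator (fun x => ∫ y in 0..x, φ y) (Icc s t))

variable {Z : (ℝ → EReal) → ℝ} {φ ψ : ℝ → ℝ} {s t : ℝ}

theorem IsInvariantSimpleVal.slopeVal_self (hZ : IsInvariantSimpleVal Z) (hφ : Monotone φ) (s : ℝ) :
    slopeVal Z φ s s = 0 :=
  hZ.simple _ (isLC_integral_of_monotone hφ le_rfl) ⟨s, by rw [edom_addIndicator, Icc_self]⟩

theorem IsInvariantSimpleVal.slopeVal_add_adjacent (hZ : IsInvariantSimpleVal Z) (hφ : Monotone φ)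
    {c : ℝ} (hsc : s ≤ c) (hct : c ≤ t) :
    slopeVal Z φ s c + slopeVal Z φ c t = slopeVal Z φ s t := by
  have hunion : Icc s c ∪ Icc c t = Icc s t := Icc_union_Icc_eq_Icc hsc hct
  have hinter : Icc s c ∩ Icc c t = Icc c c := by rw [Icc_inter_Icc_eq_singleton hsc hct, Icc_self]
  have hval := hZ.isVal.addIndicator_union (isLC_integral_of_monotone hφ hsc)
    (isLC_integral_of_monotone hφ hct) (hunion ▸ isLC_integral_of_monotone hφ (hsc.trans hct))
  rw [hunion, hinter] at hval
  have hpoint := hZ.slopeVal_self hφ c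
  unfold slopeVal at hpoint ⊢
  linarith

theorem IsInvariantSimpleVal.slopeVal_eq_of_eqOn_translate (hZ : IsInvariantSimpleVal Z)
    (hφ : Monotone φ) (hψ : Monotone ψ) (hst : s ≤ t) {r β : ℝ}
    (h : ∀ y ∈ Ioo s t, φ y = ψ (y - r) + β) :
    slopeVal Z φ s t = slopeVal Z ψ (s - r) (t - r) := by
  obtain ⟨c, hc⟩ := integral_eq_integral_comp_sub_add_affine
    (fun _ _ => hφ.intervalIntegrable) (fun _ _ => hψ.intervalIntegrable) h
  have htrans := hZ.transInv.addIndicator_translate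
    (isLC_integral_of_monotone hψ (sub_le_sub_right hst r)) r
  have hdual := hZ.dualTransInv.addIndicator_add_affine (isLC_integral_of_monotone hφ hst)
    (LinearMap.mulLeft ℝ (-β)) (-c)
  rw [preimage_sub_const_Icc, sub_add_cancel, sub_add_cancel] at htrans
  rw [slopeVal, slopeVal, ← hdual, ← htrans]
  refine congrArg Z (addIndicator_congr fun x hx => ?_)
  simp only [hc x hx, LinearMap.mulLeft_apply]
  ring

theorem tauConv_integral {φk : ℕ → ℝ → ℝ} {lk ε : ℕ → ℝ} {l : ℝ} {L : ℝ≥0}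
    (hφk : ∀ k, Monotone (φk k)) (hφ : Monotone φ) (hl : 0 ≤ l) (hanti : Antitone lk)
    (hlim : Tendsto lk atTop (𝓝 l)) (hL : ∀ k, ∀ y ∈ Icc 0 (lk k), |φk k y| ≤ L)
    (hε : ∀ k, ∀ y ∈ Icc 0 (lk k), |φk k y - φ y| ≤ ε k)
    (hεl : Tendsto (fun k => ε k * lk k) atTop (𝓝 0)) :
    TauConv (fun k => addIndicator (fun x => ∫ y in 0..x, φk k y) (Icc 0 (lk k)))
      (addIndicator (fun x => ∫ y in 0..x, φ y) (Icc 0 l)) := by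
  have hlk : ∀ k, 0 ≤ lk k := fun k => hl.trans (hanti.le_of_tendsto hlim k)
  have hint : ∀ {χ : ℝ → ℝ}, Monotone χ → ∀ a b, IntervalIntegrable χ volume a b :=
    fun hχ _ _ => hχ.intervalIntegrable
  have hInter := iInter_Icc_eq_of_antitone_of_tendsto (s := 0) hanti hlim
  rw [← hInter]
  exact tauConv_addIndicator (fun k => isLC_integral_of_monotone (hφk k) (hlk k))
    (hInter ▸ isLC_integral_of_monotone hφ hl)
    (fun k => lipschitzOnWith_integral (hint (hφk k)) (hL k))
    (intervalIntegral.continuous_primitive (hint hφ) 0)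
    (fun _ _ hij => Icc_subset_Icc_right (hanti hij)) hεl
    fun k _ hx => abs_integral_sub_integral_le (hint (hφk k)) (hint hφ) (hε k) hx

theorem TauUSC.le_slopeVal_of_tendsto (hZ : TauUSC Z) {φk : ℕ → ℝ → ℝ} {lk ε : ℕ → ℝ} {l v : ℝ}
    {L : ℝ≥0} (hφk : ∀ k, Monotone (φk k)) (hφ : Monotone φ) (hl : 0 ≤ l) (hanti : Antitone lk)
    (hlim : Tendsto lk atTop (𝓝 l)) (hL : ∀ k, ∀ y ∈ Icc 0 (lk k), |φk k y| ≤ L)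
    (hε : ∀ k, ∀ y ∈ Icc 0 (lk k), |φk k y - φ y| ≤ ε k)
    (hεl : Tendsto (fun k => ε k * lk k) atTop (𝓝 0))
    (hv : Tendsto (fun k => slopeVal Z (φk k) 0 (lk k)) atTop (𝓝 v)) : v ≤ slopeVal Z φ 0 l :=
  hZ.le_of_tendsto (tauConv_integral hφk hφ hl hanti hlim hL hε hεl) hv

end SlopeVal

section Additive

open Set

theorem apply_natCast_mul_of_add {g : ℝ → ℝ}
    (hadd : ∀ x y, 0 ≤ x → 0 ≤ y → g (x + y) = g x + g y) {x : ℝ} (hx : 0 ≤ x) (n : ℕ) :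
    g (n * x) = n * g x := by
  induction n with
  | zero => simpa using hadd 0 0 le_rfl le_rfl
  | succ n ih =>
    rw [Nat.cast_succ, add_one_mul, hadd _ _ (by positivity) hx, ih, add_one_mul]

theorem apply_eq_mul_apply_one_of_add {g : ℝ → ℝ} (hnonneg : ∀ x, 0 ≤ x → 0 ≤ g x)
    (hadd : ∀ x y, 0 ≤ x → 0 ≤ y → g (x + y) = g x + g y) {x : ℝ} (hx : 0 ≤ x) :
    g x = x * g 1 := by
  have hmono : ∀ a b, 0 ≤ a → a ≤ b → g a ≤ g b := fun a b ha hab => by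
    have := hadd a (b - a) ha (sub_nonneg.2 hab)
    rw [add_sub_cancel] at this
    linarith [hnonneg _ (sub_nonneg.2 hab)]
  have hnat : ∀ k : ℕ, g k = k * g 1 := fun k => by
    simpa using apply_natCast_mul_of_add hadd zero_le_one k
  have hbound : ∀ n : ℕ, n * |g x - x * g 1| ≤ g 1 := fun n => by
    have hnx : 0 ≤ n * x := by positivity
    have hfloor : (⌊n * x⌋₊ : ℝ) ≤ n * x := Nat.floor_le hnx
    have hceil : n * x ≤ (⌊n * x⌋₊ + 1 : ℕ) := by exact_mod_cast (Nat.lt_floor_add_one _).le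
    have hlower := hmono _ _ (Nat.cast_nonneg _) hfloor
    have hupper := hmono _ _ hnx hceil
    rw [apply_natCast_mul_of_add hadd hx, hnat, Nat.cast_succ] at hupper
    rw [apply_natCast_mul_of_add hadd hx, hnat] at hlower
    rw [Nat.cast_succ] at hceil
    rw [← Nat.abs_cast n, ← abs_mul, abs_le]
    constructor <;> nlinarith
  by_contra hne
  obtain ⟨n, hn⟩ := exists_nat_gt (g 1 / |g x - x * g 1|)
  exact (hbound n).not_gt ((div_lt_iff₀ (abs_pos.2 (sub_ne_zero.2 hne))).1 hn)

end Additive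

section Concave

open Set

variable {f : ℝ → ℝ}

theorem monotoneOn_of_concaveOn_of_nonneg (hf : ConcaveOn ℝ (Ici 0) f)
    (hnonneg : ∀ x ∈ Ici (0 : ℝ), 0 ≤ f x) : MonotoneOn f (Ici 0) := by
  intro x hx y hy hxy
  by_contra! hlt
  have hlt_xy : x < y := hxy.lt_of_ne fun h => hlt.ne' (congrArg f h)
  set σ := (f x - f y) / (y - x) with hσ
  have hσ_pos : 0 < σ := div_pos (sub_pos.2 hlt) (sub_pos.2 hlt_xy)
  -- A negative slope `-σ` persists to the right of `y`, so that `f` reaches `-1` at `z`.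
  set z := y + (f y + 1) / σ with hz
  have hyz : y < z := lt_add_of_pos_right y (div_pos (by linarith [hnonneg y hy]) hσ_pos)
  have hz_mem : z ∈ Ici (0 : ℝ) := (mem_Ici.1 hy).trans hyz.le
  have hslope : (f z - f y) / (z - y) ≤ -σ := by
    rw [hσ, ← neg_div, neg_sub]
    exact hf.slope_anti_adjacent hx hz_mem hlt_xy hyz
  have hmul : σ * (z - y) = f y + 1 := by
    rw [hz, add_sub_cancel_left, mul_div_cancel₀ _ hσ_pos.ne']
  rw [div_le_iff₀ (sub_pos.2 hyz)] at hslope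
  linarith [hnonneg z hz_mem]

theorem exists_tendsto_nhdsGT_of_concaveOn_of_nonneg (hf : ConcaveOn ℝ (Ici 0) f)
    (hnonneg : ∀ x ∈ Ici (0 : ℝ), 0 ≤ f x) : ∃ v, Tendsto f (𝓝[>] 0) (𝓝 v) :=
  ⟨_, ((monotoneOn_of_concaveOn_of_nonneg hf hnonneg).mono Ioi_subset_Ici_self).tendsto_nhdsGT
    ⟨0, forall_mem_image.2 fun x hx => hnonneg x (Ioi_subset_Ici_self hx)⟩⟩

theorem exists_tendsto_div_atTop_of_concaveOn_of_nonneg (hf : ConcaveOn ℝ (Ici 0) f)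
    (hnonneg : ∀ x ∈ Ici (0 : ℝ), 0 ≤ f x) (hzero : f 0 = 0) :
    ∃ v, Tendsto (fun t => f t / t) atTop (𝓝 v) := by
  have hanti : Antitone fun t : Ioi (0 : ℝ) => f t / t := fun x y hxy => by
    have := hf.antitoneOn_slope_gt self_mem_Ici ⟨Ioi_subset_Ici_self x.2, x.2⟩
      ⟨Ioi_subset_Ici_self y.2, y.2⟩ hxy
    simpa only [slope_def_field, hzero, sub_zero] using this
  exact ⟨_, tendsto_comp_val_Ioi_atTop.1 (tendsto_atTop_ciInf hanti
    ⟨0, forall_mem_range.2 fun t => div_nonneg (hnonneg t (Ioi_subset_Ici_self t.2)) t.2.le⟩)⟩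

end Concave

section PeriodicSlope

open Set

/-- A unit cell of total rise `c`: a slope profile `ω` on `[0, 1]` with values in `[0, c]`. Its
copies can be concatenated to a monotone slope, each copy starting `c` higher than the one
before. -/
structure IsCell (ω : ℝ → ℝ) (c : ℝ) : Prop where
  monotone : Monotone ω
  nonneg : 0 ≤ ω 0
  le : ω 1 ≤ c

/-- The slope on `ℝ` built from copies of the cell `ω` scaled by `h`, one on each
`[k * h, (k + 1) * h]`. It approximates `x ↦ c * x` as `h → 0`. -/
def cellSlope (ω : ℝ → ℝ) (c h x : ℝ) : ℝ :=
  h * (c * ⌊x / h⌋ + ω (Int.fract (x / h)))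

variable {ω : ℝ → ℝ} {c h : ℝ}

theorem IsCell.nonneg_fract (hω : IsCell ω c) (x : ℝ) : 0 ≤ ω (Int.fract x) :=
  hω.nonneg.trans (hω.monotone (Int.fract_nonneg x))

theorem IsCell.fract_le (hω : IsCell ω c) (x : ℝ) : ω (Int.fract x) ≤ c :=
  (hω.monotone (Int.fract_lt_one x).le).trans hω.le

theorem IsCell.rise_nonneg (hω : IsCell ω c) : 0 ≤ c :=
  (hω.nonneg_fract 0).trans (hω.fract_le 0)

theorem IsCell.monotone_cellSlope (hω : IsCell ω c) (hh : 0 < h) : Monotone (cellSlope ω c h) := by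
  have hunit : Monotone fun u : ℝ => c * ⌊u⌋ + ω (Int.fract u) := by
    intro u v huv
    rcases (Int.floor_mono huv).eq_or_lt with heq | hlt
    · have hfract : Int.fract u ≤ Int.fract v := by
        rw [Int.fract, Int.fract, heq]
        exact sub_le_sub_right huv _
      simp only [heq]
      gcongr
      exact hω.monotone hfract
    · have hstep : (⌊u⌋ : ℝ) + 1 ≤ ⌊v⌋ := by exact_mod_cast hlt
      calc c * ⌊u⌋ + ω (Int.fract u) ≤ c * ⌊u⌋ + c := by gcongr; exact hω.fract_le u
        _ = c * (⌊u⌋ + 1) := by ring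
        _ ≤ c * ⌊v⌋ := mul_le_mul_of_nonneg_left hstep hω.rise_nonneg
        _ ≤ c * ⌊v⌋ + ω (Int.fract v) := le_add_of_nonneg_right (hω.nonneg_fract v)
  exact fun x y hxy =>
    mul_le_mul_of_nonneg_left (hunit (div_le_div_of_nonneg_right hxy hh.le)) hh.le

theorem IsCell.abs_cellSlope_sub_mul_le (hω : IsCell ω c) (hh : 0 < h) (x : ℝ) :
    |cellSlope ω c h x - c * x| ≤ c * h := by
  have hdiff : cellSlope ω c h x - c * x =
      (ω (Int.fract (x / h)) - c * Int.fract (x / h)) * h := by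
    rw [cellSlope, Int.fract]
    field_simp
    ring
  have hfract : c * Int.fract (x / h) ∈ Icc 0 c :=
    ⟨mul_nonneg hω.rise_nonneg (Int.fract_nonneg _),
      mul_le_of_le_one_right hω.rise_nonneg (Int.fract_lt_one _).le⟩
  rw [hdiff, abs_mul, abs_of_pos hh]
  gcongr
  simpa using abs_sub_le_of_le_of_le (hω.nonneg_fract _) (hω.fract_le _) hfract.1 hfract.2

theorem cellSlope_of_mem_Ioo {x : ℝ} (hx : x ∈ Ioo 0 h) : cellSlope ω c h x = h * ω (x / h) := by
  have hh : 0 < h := hx.1.trans hx.2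
  have hmem : x / h ∈ Ico (0 : ℝ) 1 := ⟨(div_pos hx.1 hh).le, (div_lt_one hh).2 hx.2⟩
  rw [cellSlope, Int.floor_eq_zero_iff.2 hmem, Int.fract_eq_self.2 hmem, Int.cast_zero, mul_zero,
    zero_add]

theorem cellSlope_eq_cellSlope_sub_add (hh : h ≠ 0) (x : ℝ) :
    cellSlope ω c h x = cellSlope ω c h (x - h) + c * h := by
  rw [cellSlope, cellSlope, sub_div, div_self hh, Int.floor_sub_one, Int.fract_sub_one]
  push_cast
  ring

variable {Z : (ℝ → EReal) → ℝ}

theorem IsCell.monotone_scale (hω : IsCell ω c) (hh : 0 < h) : Monotone fun y => h * ω (y / h) :=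
  fun _ _ hxy =>
    mul_le_mul_of_nonneg_left (hω.monotone (div_le_div_of_nonneg_right hxy hh.le)) hh.le

theorem IsInvariantSimpleVal.slopeVal_cellSlope (hZ : IsInvariantSimpleVal Z) (hω : IsCell ω c)
    (hh : 0 < h) (n : ℕ) :
    slopeVal Z (cellSlope ω c h) 0 (n * h) = n * slopeVal Z (fun y => h * ω (y / h)) 0 h := by
  have hmono := hω.monotone_cellSlope hh
  have hfirst : slopeVal Z (cellSlope ω c h) 0 h = slopeVal Z (fun y => h * ω (y / h)) 0 h := by
    simpa using hZ.slopeVal_eq_of_eqOn_translate hmono (hω.monotone_scale hh) hh.le (r := 0)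
      (β := 0) fun y hy => by simpa using cellSlope_of_mem_Ioo hy
  induction n with
  | zero => simpa using hZ.slopeVal_self hmono 0
  | succ n ih =>
    have hle : h ≤ (n + 1) * h := le_mul_of_one_le_left hh.le (by simp)
    have hshift := hZ.slopeVal_eq_of_eqOn_translate hmono hmono hle (r := h)
      fun y _ => cellSlope_eq_cellSlope_sub_add hh.ne' y
    rw [sub_self, add_one_mul, add_sub_cancel_right, ih] at hshift
    rw [Nat.cast_succ, ← hZ.slopeVal_add_adjacent hmono hh.le hle, hfirst, add_one_mul, hshift,
      add_one_mul, add_comm]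

theorem IsInvariantSimpleVal.le_slopeVal_of_cell (hZ : IsInvariantSimpleVal Z) (husc : TauUSC Z)
    (hω : IsCell ω c) {l v : ℝ} (hl : 0 < l)
    (hv : ∀ n : ℕ, ∀ h, 0 < h → n * h = l → n * slopeVal Z (fun y => h * ω (y / h)) 0 h = v) :
    v ≤ slopeVal Z (fun y => c * y) 0 l := by
  have hc := hω.rise_nonneg
  set h : ℕ → ℝ := fun n => l / (n + 1)
  have hh : ∀ n, 0 < h n := fun n => by positivity
  have hnh : ∀ n, ((n + 1 : ℕ) : ℝ) * h n = l := fun n => by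
    rw [Nat.cast_succ]
    exact mul_div_cancel₀ l n.cast_add_one_ne_zero
  have hlim : Tendsto h atTop (𝓝 0) := by
    simpa only [h, mul_one_div, mul_zero] using tendsto_one_div_add_atTop_nhds_zero_nat.const_mul l
  have hclose : ∀ n y, |cellSlope ω c (h n) y - c * y| ≤ c * h n := fun n y =>
    hω.abs_cellSlope_sub_mul_le (hh n) y
  refine husc.le_slopeVal_of_tendsto (φk := fun n => cellSlope ω c (h n)) (lk := fun _ => l)
    (ε := fun n => c * h n) (L := ⟨2 * c * l, by positivity⟩)
    (fun n => hω.monotone_cellSlope (hh n)) (monotone_id.const_mul hc) hl.le antitone_const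
    tendsto_const_nhds (fun n y hy => ?_) (fun n y _ => hclose n y) ?_ ?_
  · have hle : h n ≤ l := div_le_self hl.le (by simp)
    have hy' : |c * y| ≤ c * l := by
      rw [abs_of_nonneg (mul_nonneg hc hy.1)]
      exact mul_le_mul_of_nonneg_left hy.2 hc
    calc |cellSlope ω c (h n) y| ≤ |cellSlope ω c (h n) y - c * y| + |c * y| := by
          simpa using abs_add_le (cellSlope ω c (h n) y - c * y) (c * y)
      _ ≤ c * h n + c * l := add_le_add (hclose n y) hy'
      _ ≤ c * l + c * l := by gcongr
      _ = 2 * c * l := by ring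
  · simpa using (hlim.const_mul c).mul_const l
  · refine tendsto_const_nhds.congr fun n => ?_
    rw [← hv (n + 1) (h n) (hh n) (hnh n), ← hZ.slopeVal_cellSlope hω (hh n), hnh]

end PeriodicSlope

section QuadVal

open Set

/-- The value of `Z` at the parabola `a * x ^ 2 / 2` restricted to `[0, l]`. -/
def quadVal (Z : (ℝ → EReal) → ℝ) (a l : ℝ) : ℝ :=
  slopeVal Z (fun y => a * y) 0 l

variable {Z : (ℝ → EReal) → ℝ} {a b l : ℝ}

theorem quadVal_zero_left (hvanish : ∀ a b : ℝ, a ≤ b → Z (eIndicator (Icc a b)) = 0)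
    (hl : 0 ≤ l) : quadVal Z 0 l = 0 := by
  simp only [quadVal, slopeVal, zero_mul, intervalIntegral.integral_zero, addIndicator_zero]
  exact hvanish 0 l hl

theorem IsInvariantSimpleVal.slopeVal_eq_quadVal (hZ : IsInvariantSimpleVal Z) {φ : ℝ → ℝ}
    (hφ : Monotone φ) (ha : 0 ≤ a) {s t β : ℝ} (hst : s ≤ t)
    (h : ∀ y ∈ Ioo s t, φ y = a * (y - s) + β) : slopeVal Z φ s t = quadVal Z a (t - s) := by
  rw [hZ.slopeVal_eq_of_eqOn_translate hφ (monotone_id.const_mul ha) hst h, sub_self]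
  rfl

theorem IsInvariantSimpleVal.quadVal_add (hZ : IsInvariantSimpleVal Z) (ha : 0 ≤ a) {s t : ℝ}
    (hs : 0 ≤ s) (ht : 0 ≤ t) : quadVal Z a (s + t) = quadVal Z a s + quadVal Z a t := by
  have hmono : Monotone fun y => a * y := monotone_id.const_mul ha
  have hst : s ≤ s + t := le_add_of_nonneg_right ht
  have hright := hZ.slopeVal_eq_quadVal hmono ha hst (β := a * s) fun y _ => by ring
  rw [add_sub_cancel_left] at hright
  rw [quadVal, ← hZ.slopeVal_add_adjacent hmono hs hst, hright]
  rfl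

theorem IsInvariantSimpleVal.quadVal_nonneg (hZ : IsInvariantSimpleVal Z) (husc : TauUSC Z)
    (hvanish : ∀ a b : ℝ, a ≤ b → Z (eIndicator (Icc a b)) = 0) (ha : 0 ≤ a) (hl : 0 ≤ l) :
    0 ≤ quadVal Z a l := by
  rcases hl.eq_or_lt with rfl | hl
  · exact (hZ.slopeVal_self (monotone_id.const_mul ha) 0).ge
  · have hcell : IsCell (fun _ => 0) a := ⟨monotone_const, le_rfl, ha⟩
    refine hZ.le_slopeVal_of_cell husc hcell hl fun n h hh _ => ?_
    have hflat := quadVal_zero_left hvanish hh.le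
    simp only [quadVal, zero_mul] at hflat
    simp only [mul_zero, hflat]

theorem IsInvariantSimpleVal.quadVal_eq_mul (hZ : IsInvariantSimpleVal Z) (husc : TauUSC Z)
    (hvanish : ∀ a b : ℝ, a ≤ b → Z (eIndicator (Icc a b)) = 0) (ha : 0 ≤ a) (hl : 0 ≤ l) :
    quadVal Z a l = l * quadVal Z a 1 :=
  apply_eq_mul_apply_one_of_add (fun _ => hZ.quadVal_nonneg husc hvanish ha)
    (fun _ _ => hZ.quadVal_add ha) hl

/-- The slope profile on the unit interval with slope `a` on `[0, p]` and slope `b` on `[p, 1]`. -/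
def twoSlopeCell (a b p r : ℝ) : ℝ :=
  a * min r p + b * max (r - p) 0

theorem isCell_twoSlopeCell (ha : 0 ≤ a) (hb : 0 ≤ b) {p : ℝ} (hp₀ : 0 ≤ p) (hp₁ : p ≤ 1) :
    IsCell (twoSlopeCell a b p) (p * a + (1 - p) * b) where
  monotone _ _ h := by
    unfold twoSlopeCell
    gcongr
  nonneg := by simp [twoSlopeCell, hp₀]
  le := by
    rw [twoSlopeCell, min_eq_right hp₁, max_eq_left (sub_nonneg.2 hp₁)]
    linarith

theorem IsInvariantSimpleVal.slopeVal_twoSlopeCell (hZ : IsInvariantSimpleVal Z)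
    (ha : 0 ≤ a) (hb : 0 ≤ b) {p h : ℝ} (hp₀ : 0 ≤ p) (hp₁ : p ≤ 1) (hh : 0 < h) :
    slopeVal Z (fun y => h * twoSlopeCell a b p (y / h)) 0 h =
      quadVal Z a (p * h) + quadVal Z b ((1 - p) * h) := by
  have hmono := (isCell_twoSlopeCell ha hb hp₀ hp₁).monotone_scale hh
  have hph₀ : 0 ≤ p * h := by positivity
  have hph₁ : p * h ≤ h := mul_le_of_le_one_left hh.le hp₁
  have hleft := hZ.slopeVal_eq_quadVal hmono ha hph₀ (β := 0) fun y hy => by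
    have hyp : y / h ≤ p := (div_le_iff₀ hh).2 hy.2.le
    rw [twoSlopeCell, min_eq_left hyp, max_eq_right (sub_nonpos.2 hyp)]
    field_simp
    ring
  have hright := hZ.slopeVal_eq_quadVal hmono hb hph₁ (β := a * (p * h)) fun y hy => by
    have hyp : p ≤ y / h := (le_div_iff₀ hh).2 hy.1.le
    rw [twoSlopeCell, min_eq_right hyp, max_eq_left (sub_nonneg.2 hyp)]
    field_simp
    ring
  rw [← hZ.slopeVal_add_adjacent hmono hph₀ hph₁, hleft, hright, sub_zero, one_sub_mul]

theorem IsInvariantSimpleVal.concaveOn_quadVal (hZ : IsInvariantSimpleVal Z) (husc : TauUSC Z)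
    (hvanish : ∀ a b : ℝ, a ≤ b → Z (eIndicator (Icc a b)) = 0) :
    ConcaveOn ℝ (Ici 0) fun a => quadVal Z a 1 := by
  refine ⟨convex_Ici 0, fun a ha b hb p q hp hq hpq => ?_⟩
  obtain rfl : q = 1 - p := eq_sub_of_add_eq' hpq
  simp only [smul_eq_mul]
  have hp₁ : p ≤ 1 := sub_nonneg.1 hq
  refine hZ.le_slopeVal_of_cell husc (isCell_twoSlopeCell ha hb hp hp₁) one_pos
    fun n h hh hnh => ?_
  rw [hZ.slopeVal_twoSlopeCell ha hb hp hp₁ hh,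
    hZ.quadVal_eq_mul husc hvanish ha (by positivity),
    hZ.quadVal_eq_mul husc hvanish hb (by positivity)]
  linear_combination (p * quadVal Z a 1 + (1 - p) * quadVal Z b 1) * hnh

theorem IsInvariantSimpleVal.eq_zero_of_tendsto_quadVal (hZ : IsInvariantSimpleVal Z)
    (husc : TauUSC Z) (hvanish : ∀ a b : ℝ, a ≤ b → Z (eIndicator (Icc a b)) = 0)
    {ak lk : ℕ → ℝ} {C v : ℝ} (hak : ∀ k, 0 ≤ ak k) (hl : 0 ≤ l) (hanti : Antitone lk)
    (hlim : Tendsto lk atTop (𝓝 l)) (hC : ∀ k, ak k * lk k ≤ C)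
    (hsq : Tendsto (fun k => ak k * lk k * lk k) atTop (𝓝 0))
    (hv : Tendsto (fun k => quadVal Z (ak k) (lk k)) atTop (𝓝 v)) : v = 0 := by
  have hlk : ∀ k, 0 ≤ lk k := fun k => hl.trans (hanti.le_of_tendsto hlim k)
  have hbound : ∀ k, ∀ y ∈ Icc 0 (lk k), |ak k * y| ≤ ak k * lk k := fun k y hy => by
    rw [abs_of_nonneg (mul_nonneg (hak k) hy.1)]
    exact mul_le_mul_of_nonneg_left hy.2 (hak k)
  have hC₀ : 0 ≤ C := (mul_nonneg (hak 0) (hlk 0)).trans (hC 0)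
  have hle : v ≤ quadVal Z 0 l :=
    husc.le_slopeVal_of_tendsto (L := ⟨C, hC₀⟩) (fun k => monotone_id.const_mul (hak k))
      (monotone_id.const_mul le_rfl) hl hanti hlim (fun k y hy => (hbound k y hy).trans (hC k))
      (fun k y hy => by simpa using hbound k y hy) hsq hv
  rw [quadVal_zero_left hvanish hl] at hle
  exact hle.antisymm
    (ge_of_tendsto' hv fun k => hZ.quadVal_nonneg husc hvanish (hak k) (hlk k))

theorem IsInvariantSimpleVal.tendsto_quadVal_nhdsGT (hZ : IsInvariantSimpleVal Z)
    (husc : TauUSC Z) (hvanish : ∀ a b : ℝ, a ≤ b → Z (eIndicator (Icc a b)) = 0) :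
    Tendsto (fun a => quadVal Z a 1) (𝓝[>] 0) (𝓝 0) := by
  obtain ⟨v, hv⟩ := exists_tendsto_nhdsGT_of_concaveOn_of_nonneg
    (hZ.concaveOn_quadVal husc hvanish)
    fun _ ha => hZ.quadVal_nonneg husc hvanish ha zero_le_one
  have hseq : Tendsto (fun k : ℕ => 1 / ((k : ℝ) + 1)) atTop (𝓝 0) :=
    tendsto_one_div_add_atTop_nhds_zero_nat
  have hseq_pos : ∀ k : ℕ, (0 : ℝ) < 1 / ((k : ℝ) + 1) := fun _ => Nat.one_div_pos_of_nat
  have hv₀ : v = 0 := hZ.eq_zero_of_tendsto_quadVal husc hvanish (C := 1)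
    (fun k => (hseq_pos k).le) zero_le_one antitone_const tendsto_const_nhds
    (fun k => by simpa using inv_le_one_of_one_le₀ (by simp : (1 : ℝ) ≤ k + 1))
    (by simpa only [mul_one] using hseq)
    (hv.comp (tendsto_nhdsWithin_iff.2 ⟨hseq, Eventually.of_forall hseq_pos⟩))
  rwa [hv₀] at hv

theorem IsInvariantSimpleVal.tendsto_quadVal_div_atTop (hZ : IsInvariantSimpleVal Z)
    (husc : TauUSC Z) (hvanish : ∀ a b : ℝ, a ≤ b → Z (eIndicator (Icc a b)) = 0) :
    Tendsto (fun a => quadVal Z a 1 / a) atTop (𝓝 0) := by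
  obtain ⟨v, hv⟩ := exists_tendsto_div_atTop_of_concaveOn_of_nonneg
    (hZ.concaveOn_quadVal husc hvanish)
    (fun _ ha => hZ.quadVal_nonneg husc hvanish ha zero_le_one)
    (quadVal_zero_left hvanish zero_le_one)
  have hseq : Tendsto (fun k : ℕ => 1 / ((k : ℝ) + 1)) atTop (𝓝 0) :=
    tendsto_one_div_add_atTop_nhds_zero_nat
  have hone : ∀ k : ℕ, ((k : ℝ) + 1) * (1 / ((k : ℝ) + 1)) = 1 := fun k =>
    mul_one_div_cancel k.cast_add_one_ne_zero
  have hquad : ∀ k : ℕ, quadVal Z ((k : ℝ) + 1) 1 / ((k : ℝ) + 1) =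
      quadVal Z ((k : ℝ) + 1) (1 / ((k : ℝ) + 1)) := fun k => by
    rw [hZ.quadVal_eq_mul husc hvanish (by positivity) (l := 1 / _) (by positivity),
      div_eq_mul_one_div, mul_comm]
  have hv₀ : v = 0 := hZ.eq_zero_of_tendsto_quadVal husc hvanish (C := 1)
    (fun k => by positivity) le_rfl (fun _ _ hij => Nat.one_div_le_one_div hij) hseq
    (fun k => (hone k).le) (by simpa only [hone, one_mul] using hseq)
    ((hv.comp (tendsto_natCast_atTop_atTop.atTop_add tendsto_const_nhds)).congr hquad)
  rwa [hv₀] at hv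

theorem IsInvariantSimpleVal.isConc_quadVal (hZ : IsInvariantSimpleVal Z) (husc : TauUSC Z)
    (hvanish : ∀ a b : ℝ, a ≤ b → Z (eIndicator (Icc a b)) = 0) :
    IsConc fun a => quadVal Z a 1 :=
  ⟨fun _ ha => hZ.quadVal_nonneg husc hvanish ha zero_le_one,
    hZ.concaveOn_quadVal husc hvanish,
    hZ.tendsto_quadVal_nhdsGT husc hvanish,
    hZ.tendsto_quadVal_div_atTop husc hvanish⟩

theorem IsInvariantSimpleVal.zetaOf_eq_quadVal (hZ : IsInvariantSimpleVal Z) (husc : TauUSC Z)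
    (hvanish : ∀ a b : ℝ, a ≤ b → Z (eIndicator (Icc a b)) = 0) {m : ℝ} (hm : 0 < m)
    (ha : 0 ≤ a) : zetaOf Z m a = quadVal Z a 1 := by
  have hprimitive : ∀ x : ℝ, ∫ y in 0..x, a * y = a * (x ^ 2 / 2) := fun x => by
    rw [intervalIntegral.integral_const_mul, integral_id, zero_pow two_ne_zero, sub_zero]
  have hmono : Monotone fun y => a * y := monotone_id.const_mul ha
  have hslope : slopeVal Z (fun y => a * y) (-m) m = 2 * m * quadVal Z a 1 := by
    rw [hZ.slopeVal_eq_quadVal hmono ha (β := -(a * m)) (by linarith)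
      fun y _ => by ring, hZ.quadVal_eq_mul husc hvanish ha (by linarith)]
    ring
  simp only [slopeVal, hprimitive] at hslope
  rw [zetaOf, div_eq_iff (by positivity), mul_comm, ← hslope]
  rfl

end QuadVal

/-- For a simple, τ-upper semicontinuous, translation and dually
epi-translation invariant valuation `Z` on `LC(ℝ)` vanishing on indicators of closed intervals,
the function `ζ(a) = Z(a·q + I_{[-m,m]})/(2m)` (for `a > 0`) extends to an element of `Conc`;
in particular `limsup_{a→0⁺} ζ(a) ≤ 0` (hence `ζ(a) → 0` as `a → 0⁺`) and `ζ(a)/a → 0` as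
`a → +∞`. -/
theorem stmt13 (Z : (ℝ → EReal) → ℝ)
    (hval : IsVal Z) (husc : TauUSC Z) (htrans : TransInv Z) (hdual : DualTransInv Z)
    (hsimple : ∀ u : ℝ → EReal, IsLC u → (∃ x : ℝ, edom u = {x}) → Z u = 0)
    (hvanish : ∀ a b : ℝ, a ≤ b → Z (eIndicator (Set.Icc a b)) = 0)
    (m : ℝ) (hm : 0 < m) :
    (∃ ζ₀ : ℝ → ℝ, IsConc ζ₀ ∧ ∀ a : ℝ, 0 < a → ζ₀ a = zetaOf Z m a) ∧
    limsup (zetaOf Z m) (𝓝[>] 0) ≤ 0 ∧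
    Tendsto (zetaOf Z m) (𝓝[>] 0) (𝓝 0) ∧
    Tendsto (fun a => zetaOf Z m a / a) atTop (𝓝 0) := by
  have hZ : IsInvariantSimpleVal Z := ⟨hval, htrans, hdual, hsimple⟩
  have hconc : IsConc fun a => quadVal Z a 1 := hZ.isConc_quadVal husc hvanish
  have hζ : ∀ a, 0 < a → quadVal Z a 1 = zetaOf Z m a := fun a ha =>
    (hZ.zetaOf_eq_quadVal husc hvanish hm ha.le).symm
  obtain ⟨-, -, hzero, htop⟩ := id hconc
  have hzero' : Tendsto (zetaOf Z m) (𝓝[>] 0) (𝓝 0) :=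
    hzero.congr' <| by filter_upwards [self_mem_nhdsWithin] with a ha using hζ a ha
  have htop' : Tendsto (fun a => zetaOf Z m a / a) atTop (𝓝 0) :=
    htop.congr' <| by filter_upwards [eventually_gt_atTop 0] with a ha using by rw [hζ a ha]
  exact ⟨⟨_, hconc, hζ⟩, hzero'.limsup_eq.le, hzero', htop'⟩

end
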